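/- Let d and ℓ be integers with 1 ≤ ℓ ≤ d. Let (A_n) and (B_n) be sequences of real symmetric positive definite d×d matrices such that n^{-1}·A_n converges entrywise to the block-diagonal matrix diag(𝒲, Ω) and n^{-3}·B_n converges entrywise to the block-diagonal matrix diag(𝒱, 0_{(d−ℓ)×(d−ℓ)}), where 𝒲 and 𝒱 are real symmetric positive definite ℓ×ℓ matrices and Ω is a real symmetric positive definite (d−ℓ)×(d−ℓ) matrix. For each n, let λ_{n,1} ≤ λ_{n,2} ≤ ⋯ ≤ λ_{n,d} denote the generalized eigenvalues of the pencil (A_n, B_n), ordered increasingly. Then for every integer ℓ₀ with ℓ < ℓ₀ ≤ d, the sequence n²·Σ_{i=1}^{ℓ₀} λ_{n,i} tends to +∞ as n → ∞. -/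

import Mathlib

/-!
Put `ν_i = n² λ_{n,i}`. Factoring the pencil polynomial over its roots gives, for `s > 0`,
`det (s n⁻¹Aₙ + n⁻³Bₙ) = det (n⁻¹Aₙ) ∏ (s + 1/ν_i)` (`det_scaled_eq`).
If `ν_{ℓ+1} ≤ M`, then each of the first `ℓ + 1` factors is at least `1/M` and the others are at
least `s`, so the determinant is at least `det (n⁻¹Aₙ) M^{-(ℓ+1)} s^{d-ℓ-1}`. As `n → ∞` the
determinant tends to `det (s diag(W, Ω) + diag(V, 0)) = s^{d-ℓ} det Ω det (sW + V)`, which is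
smaller than the limit of that bound once `s` is small. Hence `ν_{ℓ+1} > M` eventually; since
`ν_{ℓ+1}` is one of the positive terms of the scaled sum, the sum tends to infinity.
-/

open Filter Matrix Polynomial

lemma eval_pencil {d : ℕ} (A B : Matrix (Fin d) (Fin d) ℝ) (x : ℝ) :
    (Matrix.det ((X : ℝ[X]) • B.map C - A.map C)).eval x = (x • B - A).det := by
  rw [← Polynomial.coe_evalRingHom, RingHom.map_det]
  congr 1
  ext i j
  simp
  exact mul_comm _ _

lemma roots_pos {d : ℕ} {A B : Matrix (Fin d) (Fin d) ℝ} (hA : A.PosDef) (hB : B.PosDef)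
    {lam : Fin d → ℝ}
    (hroots : (Matrix.det ((X : ℝ[X]) • B.map C - A.map C)).roots
      = Multiset.map lam Finset.univ.val) (i : Fin d) : 0 < lam i := by
  by_contra! h
  have hmem : lam i ∈ (Matrix.det ((X : ℝ[X]) • B.map C - A.map C)).roots := by
    rw [hroots]
    exact Multiset.mem_map_of_mem _ (Finset.mem_univ i)
  have h0 := Polynomial.isRoot_of_mem_roots hmem
  rw [Polynomial.IsRoot, eval_pencil] at h0
  have hpd : (A + (-lam i) • B).PosDef :=
    hA.add_posSemidef (hB.posSemidef.smul (by linarith))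
  have hneg : lam i • B - A = -(A + (-lam i) • B) := by
    rw [neg_smul]; abel
  rw [hneg, Matrix.det_neg] at h0
  have := hpd.det_pos
  exact mul_ne_zero (by simp) this.ne' h0

/-- The leading coefficient of the pencil polynomial is eliminated by comparing the values at `0`
and at `-t`. -/
lemma det_add_smul_mul_prod {d : ℕ} {A B : Matrix (Fin d) (Fin d) ℝ}
    {lam : Fin d → ℝ}
    (hroots : (Matrix.det ((X : ℝ[X]) • B.map C - A.map C)).roots
      = Multiset.map lam Finset.univ.val) (t : ℝ) :
    (A + t • B).det * ∏ i, lam i = A.det * ∏ i, (lam i + t) := by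
  set p := Matrix.det ((X : ℝ[X]) • B.map C - A.map C) with hp
  have hdeg : p.natDegree ≤ d := by
    have h := Polynomial.natDegree_det_X_add_C_le B (-A)
    have h2 : (X : ℝ[X]) • B.map C - A.map C = (X : ℝ[X]) • B.map C + (-A).map C := by
      ext i j : 2
      simp [sub_eq_add_neg]
    rw [← h2] at h
    simpa using h
  have hcard : Multiset.card p.roots = d := by rw [hroots]; simp
  have hcard' : Multiset.card p.roots = p.natDegree :=
    le_antisymm p.card_roots' (hcard ▸ hdeg)
  have hfac := Polynomial.C_leadingCoeff_mul_prod_multiset_X_sub_C hcard'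
  rw [hroots, Multiset.map_map] at hfac
  have hev : ∀ x, (x • B - A).det = p.leadingCoeff * ∏ i, (x - lam i) := by
    intro x
    rw [← eval_pencil, ← hp]
    conv_lhs => rw [← hfac]
    change eval x (C p.leadingCoeff * ∏ i, (X - C (lam i))) = _
    rw [eval_mul, eval_C, eval_prod]
    simp
  have hn : ∀ t : ℝ, (A + t • B).det = p.leadingCoeff * (-1) ^ d * ((-1) ^ d * ∏ i, (lam i + t)) := by
    intro t
    have h1 : A + t • B = -((-t) • B - A) := by rw [neg_smul]; abel
    have h2 : ∏ i, (-t - lam i) = (-1) ^ d * ∏ i, (lam i + t) := by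
      have : ∀ i, -t - lam i = (-1) * (lam i + t) := fun i => by ring
      simp_rw [this, Finset.prod_mul_distrib]
      simp
    rw [h1, Matrix.det_neg, hev, h2]
    simp only [Fintype.card_fin]
    ring
  have h0 := hn 0
  simp only [zero_smul, add_zero] at h0
  rw [hn t, h0]
  ring

/-- For `a = n`, the factors on the right are `s + 1/ν_i` with `ν_i = n² λ_i`. -/
lemma det_scaled_eq {d : ℕ} {A B : Matrix (Fin d) (Fin d) ℝ}
    (hA : A.PosDef) (hB : B.PosDef) {lam : Fin d → ℝ}
    (hroots : (Matrix.det ((X : ℝ[X]) • B.map C - A.map C)).roots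
      = Multiset.map lam Finset.univ.val) {s a : ℝ} (hs : 0 < s) (ha : 0 < a) :
    (s • (a⁻¹ • A) + (a ^ 3)⁻¹ • B).det
      = (a⁻¹ • A).det * ∏ i, (s + (a ^ 2 * lam i)⁻¹) := by
  have hpos := roots_pos hA hB hroots
  have key := det_add_smul_mul_prod hroots (s * a ^ 2)⁻¹
  have h1 : s • (a⁻¹ • A) + (a ^ 3)⁻¹ • B = (s * a⁻¹) • (A + (s * a ^ 2)⁻¹ • B) := by
    rw [smul_add, smul_smul, smul_smul]
    congr 2
    field_simp
  have hP : 0 < ∏ i, lam i := Finset.prod_pos fun i _ => hpos i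
  have h2 : ∏ i, (s + (a ^ 2 * lam i)⁻¹) = s ^ d * (∏ i, (lam i + (s * a ^ 2)⁻¹)) / ∏ i, lam i := by
    have : ∀ i, s + (a ^ 2 * lam i)⁻¹ = s * (lam i + (s * a ^ 2)⁻¹) / lam i := by
      intro i
      have := hpos i
      field_simp
    simp_rw [this, Finset.prod_div_distrib, Finset.prod_mul_distrib]
    simp
  rw [h1, h2, Matrix.det_smul, Matrix.det_smul, Fintype.card_fin, mul_pow]
  rw [(eq_div_iff hP.ne').mpr key]
  ring

lemma det_block_limit {d l : ℕ} (W V : Matrix (Fin l) (Fin l) ℝ) (Om : Matrix (Fin (d - l)) (Fin (d - l)) ℝ)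
    (e : Fin l ⊕ Fin (d - l) ≃ Fin d) (s : ℝ) :
    (s • Matrix.reindex e e (Matrix.fromBlocks W 0 0 Om)
      + Matrix.reindex e e (Matrix.fromBlocks V 0 0 (0 : Matrix (Fin (d - l)) (Fin (d - l)) ℝ))).det
      = s ^ (d - l) * Om.det * (s • W + V).det := by
  have h : s • Matrix.reindex e e (Matrix.fromBlocks W 0 0 Om)
      + Matrix.reindex e e (Matrix.fromBlocks V 0 0 (0 : Matrix (Fin (d - l)) (Fin (d - l)) ℝ))
      = Matrix.reindex e e (Matrix.fromBlocks (s • W + V) 0 0 (s • Om)) := by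
    have : Matrix.fromBlocks (s • W + V) 0 0 (s • Om)
      = s • Matrix.fromBlocks W 0 0 Om + Matrix.fromBlocks V 0 0 0 := by
      rw [Matrix.fromBlocks_smul, Matrix.fromBlocks_add]
      simp
    rw [this]
    rfl
  rw [h, Matrix.det_reindex_self, Matrix.det_fromBlocks_zero₂₁, Matrix.det_smul, Fintype.card_fin]
  ring

lemma prod_lower_bound {d l : ℕ} (hl : l < d) {nu : Fin d → ℝ} (hpos : ∀ i, 0 < nu i)
    (hmono : Monotone nu) {M s : ℝ} (hM : 0 < M) (hs : 0 < s) (hle : nu ⟨l, hl⟩ ≤ M) :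
    (M⁻¹) ^ (l + 1) * s ^ (d - l - 1) ≤ ∏ i, (s + (nu i)⁻¹) := by
  obtain ⟨k, rfl⟩ : ∃ k, d = (l + 1) + k := ⟨d - l - 1, by omega⟩
  have hk : l + 1 + k - l - 1 = k := by omega
  rw [hk, Fin.prod_univ_add]
  have h1 : (M⁻¹) ^ (l + 1) ≤ ∏ i : Fin (l + 1), (s + (nu (Fin.castAdd k i))⁻¹) := by
    have := Finset.prod_le_prod (s := Finset.univ) (f := fun _ : Fin (l + 1) => M⁻¹)
      (g := fun i => s + (nu (Fin.castAdd k i))⁻¹) (fun _ _ => by positivity) (fun i _ => by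
        have hi : nu (Fin.castAdd k i) ≤ M :=
          (hmono (by rw [Fin.le_def]; simp; omega)).trans hle
        have := inv_anti₀ (hpos _) hi
        linarith)
    simpa using this
  have h2 : s ^ k ≤ ∏ i : Fin k, (s + (nu (Fin.natAdd (l + 1) i))⁻¹) := by
    have := Finset.prod_le_prod (s := Finset.univ) (f := fun _ : Fin k => s)
      (g := fun i => s + (nu (Fin.natAdd (l + 1) i))⁻¹) (fun _ _ => hs.le) (fun i _ => by
        have := inv_pos.mpr (hpos (Fin.natAdd (l + 1) i))
        linarith)
    simpa using this
  exact mul_le_mul h1 h2 (by positivity) (le_trans (by positivity) h1)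

/-- Deterministic core of the Breitung-statistic proposition, case `ℓ₀ > ℓ`:
the ordered generalized eigenvalues of the pencil `(Aₙ, Bₙ)` (the roots, with
multiplicity, of `det (λ Bₙ - Aₙ)`), summed over the first `ℓ` and scaled by `n²`,
tend to infinity when summed over the first `ℓ₀ > ℓ`. -/
theorem stmt_1 {d l : ℕ} (hl : 1 ≤ l) (hld : l ≤ d)
    (A B : ℕ → Matrix (Fin d) (Fin d) ℝ)
    (hA : ∀ n, (A n).PosDef) (hB : ∀ n, (B n).PosDef)
    (W V : Matrix (Fin l) (Fin l) ℝ) (Om : Matrix (Fin (d - l)) (Fin (d - l)) ℝ)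
    (hW : W.PosDef) (hV : V.PosDef) (hOm : Om.PosDef)
    (hAlim : ∀ i j, Tendsto (fun n : ℕ => ((n : ℝ))⁻¹ * A n i j) atTop
      (nhds (Matrix.reindex (finSumFinEquiv.trans (finCongr (Nat.add_sub_cancel' hld)))
        (finSumFinEquiv.trans (finCongr (Nat.add_sub_cancel' hld)))
        (Matrix.fromBlocks W 0 0 Om) i j)))
    (hBlim : ∀ i j, Tendsto (fun n : ℕ => ((n : ℝ) ^ 3)⁻¹ * B n i j) atTop
      (nhds (Matrix.reindex (finSumFinEquiv.trans (finCongr (Nat.add_sub_cancel' hld)))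
        (finSumFinEquiv.trans (finCongr (Nat.add_sub_cancel' hld)))
        (Matrix.fromBlocks V 0 0 (0 : Matrix (Fin (d - l)) (Fin (d - l)) ℝ)) i j)))
    (lam : ℕ → Fin d → ℝ)
    (hmono : ∀ n, Monotone (lam n))
    (hroots : ∀ n, (Matrix.det ((Polynomial.X : Polynomial ℝ) • (B n).map Polynomial.C
        - (A n).map Polynomial.C)).roots = Multiset.map (lam n) Finset.univ.val) :
    ∀ (l₀ : ℕ) (_ : l < l₀) (h₂ : l₀ ≤ d),
      Tendsto (fun n : ℕ => (n : ℝ) ^ 2 * ∑ i : Fin l₀, lam n (Fin.castLE h₂ i)) atTop atTop := by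
  intro l₀ hl₀ h₂
  have hlt : l < d := lt_of_lt_of_le hl₀ h₂
  set e : Fin l ⊕ Fin (d - l) ≃ Fin d :=
    finSumFinEquiv.trans (finCongr (Nat.add_sub_cancel' hld)) with he
  have hpos : ∀ n i, 0 < lam n i := fun n => roots_pos (hA n) (hB n) (hroots n)
  have hAt : Tendsto (fun n : ℕ => (n : ℝ)⁻¹ • A n) atTop
      (nhds (Matrix.reindex e e (Matrix.fromBlocks W 0 0 Om))) :=
    tendsto_pi_nhds.2 fun i => tendsto_pi_nhds.2 fun j => hAlim i j
  have hBt : Tendsto (fun n : ℕ => ((n : ℝ) ^ 3)⁻¹ • B n) atTop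
      (nhds (Matrix.reindex e e
        (Matrix.fromBlocks V 0 0 (0 : Matrix (Fin (d - l)) (Fin (d - l)) ℝ)))) :=
    tendsto_pi_nhds.2 fun i => tendsto_pi_nhds.2 fun j => hBlim i j
  have hdet : Continuous fun N : Matrix (Fin d) (Fin d) ℝ => N.det :=
    continuous_id.matrix_det
  have hAdet : Tendsto (fun n : ℕ => ((n : ℝ)⁻¹ • A n).det) atTop (nhds (W.det * Om.det)) := by
    have h := (hdet.tendsto _).comp hAt
    rwa [Matrix.det_reindex_self, Matrix.det_fromBlocks_zero₂₁] at h
  have key : Tendsto (fun n : ℕ => (n : ℝ) ^ 2 * lam n ⟨l, hlt⟩) atTop atTop := by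
    rw [tendsto_atTop]
    intro M'
    set M := max M' 1 with hMdef
    have hM : 0 < M := lt_of_lt_of_le one_pos (le_max_right _ _)
    have hWd := hW.det_pos
    have hOd := hOm.det_pos
    -- a small `s` for which the limiting determinant lies strictly below the limiting bound
    obtain ⟨s, hs, hsmall⟩ : ∃ s : ℝ, 0 < s ∧ s * (s • W + V).det < (M⁻¹) ^ (l + 1) * W.det := by
      have hc : Continuous fun s : ℝ => s * (s • W + V).det :=
        continuous_id.mul
          (((continuous_id.smul continuous_const).add continuous_const).matrix_det)
      have ht := hc.tendsto 0
      rw [zero_mul] at ht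
      have hev := ht.eventually_lt_const (show 0 < (M⁻¹) ^ (l + 1) * W.det by positivity)
      obtain ⟨s, h1, h2⟩ := ((hev.filter_mono nhdsWithin_le_nhds).and
        (self_mem_nhdsWithin (a := (0 : ℝ)) (s := Set.Ioi 0))).exists
      exact ⟨s, h2, h1⟩
    have hL : Tendsto (fun n : ℕ => (s • ((n : ℝ)⁻¹ • A n) + ((n : ℝ) ^ 3)⁻¹ • B n).det) atTop
        (nhds (s ^ (d - l) * Om.det * (s • W + V).det)) := by
      have h := (hdet.tendsto _).comp ((hAt.const_smul s).add hBt)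
      rwa [det_block_limit] at h
    have hR := hAdet.mul_const ((M⁻¹) ^ (l + 1) * s ^ (d - l - 1))
    have hlim : s ^ (d - l) * Om.det * (s • W + V).det
        < W.det * Om.det * ((M⁻¹) ^ (l + 1) * s ^ (d - l - 1)) := by
      have hpw : s ^ (d - l) = s ^ (d - l - 1) * s := by
        rw [← pow_succ]
        congr 1
        omega
      have hq : 0 < s ^ (d - l - 1) * Om.det := by positivity
      rw [hpw]
      linarith [mul_lt_mul_of_pos_left hsmall hq]
    filter_upwards [hL.eventually_lt hR hlim, eventually_gt_atTop 0] with n hn hn0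
    have ha : (0 : ℝ) < n := by exact_mod_cast hn0
    by_contra! hcon
    have hle : (n : ℝ) ^ 2 * lam n ⟨l, hlt⟩ ≤ M := hcon.le.trans (le_max_left _ _)
    rw [det_scaled_eq (hA n) (hB n) (hroots n) hs ha] at hn
    have hb := prod_lower_bound (nu := fun i => (n : ℝ) ^ 2 * lam n i) hlt
      (fun i => mul_pos (by positivity) (hpos n i))
      (fun i j hij => mul_le_mul_of_nonneg_left (hmono n hij) (by positivity)) hM hs hle
    have hAp : 0 < ((n : ℝ)⁻¹ • A n).det := ((hA n).smul (inv_pos.mpr ha)).det_pos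
    exact absurd hn (not_lt.mpr (mul_le_mul_of_nonneg_left hb hAp.le))
  refine tendsto_atTop_mono (fun n => mul_le_mul_of_nonneg_left ?_ (by positivity)) key
  exact Finset.single_le_sum (f := fun i : Fin l₀ => lam n (Fin.castLE h₂ i))
    (fun i _ => (hpos n _).le) (Finset.mem_univ (⟨l, hl₀⟩ : Fin l₀))
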